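/- Let μ be a full Borel probability measure on ℝ^d and let J ∈ D(μ) be a nonzero idempotent matrix such that there is no nonzero idempotent L ∈ D(μ) with L ≠ J satisfying JL = LJ = L. If T ∈ D(μ) satisfies JT = TJ = T and 0 < det_J T < 1, then T^k → 0 (the zero matrix) as k → ∞. -/

import Mathlib

/-!
For full `μ` the semigroup `D(μ)` is compact. The inequality `|φ_μ(L)| ≤ |φ_μ(L ∘ A)|` for
`A ∈ D(μ)` makes it bounded: otherwise, normalizing, there would be functionals `L → 0` with `L ∘ A`
converging to some `L₀ ≠ 0`, and `|φ_μ(r L₀)| = 1` for all `r` would force `L₀` to be almost surely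
constant. It is closed by Prokhorov's theorem, because the cofactors `ν` of a bounded set of
operators are tight. The matrices `A ∈ D(μ)` with `JA = AJ = A` and `|det_J A| ≤ |det_J T| < 1`
therefore form a compact semigroup. It omits `J`, whose `det_J` is `1`, so by primitivity its only
idempotent is `0`. The closure of `{T, T², …}` contains an idempotent, so the powers of `T`
accumulate at `0`, and being bounded they converge to it.
-/

open MeasureTheory Filter Topology Matrix

/-- Convolution of two Borel measures on `ℝ^d`. -/
noncomputable def mconv {d : ℕ} (μ ν : Measure (Fin d → ℝ)) : Measure (Fin d → ℝ) :=
  (μ.prod ν).map (fun p => p.1 + p.2)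

/-- The Urbanik decomposability semigroup `D(μ)`: all matrices `A` such that
`μ = (A_*μ) ∗ ν` for some probability measure `ν`. -/
def UrbanikD {d : ℕ} (μ : Measure (Fin d → ℝ)) : Set (Matrix (Fin d) (Fin d) ℝ) :=
  {A | ∃ ν : Measure (Fin d → ℝ), IsProbabilityMeasure ν ∧ μ = mconv (μ.map A.mulVec) ν}

/-- A measure on `ℝ^d` is full if its support is not contained in any hyperplane,
i.e. no translate `v + L` of a proper linear subspace `L` carries all of its mass. -/
def IsFull {d : ℕ} (μ : Measure (Fin d → ℝ)) : Prop :=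
  ∀ (v : Fin d → ℝ) (L : Submodule ℝ (Fin d → ℝ)), L ≠ ⊤ → μ {x | x - v ∈ L} < 1

/-- Weak convergence of a sequence of measures on `ℝ^d`. -/
def WeakLim {d : ℕ} (μs : ℕ → Measure (Fin d → ℝ)) (μ : Measure (Fin d → ℝ)) : Prop :=
  ∀ f : BoundedContinuousFunction (Fin d → ℝ) ℝ,
    Tendsto (fun n => ∫ x, f x ∂(μs n)) atTop (𝓝 (∫ x, f x ∂μ))

/-- Partial sums `S_n = X_1 + ... + X_n`. -/
def partialSum {Ω : Type*} {d : ℕ} (X : ℕ → Ω → (Fin d → ℝ)) (n : ℕ) (ω : Ω) :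
    Fin d → ℝ :=
  ∑ j ∈ Finset.Icc 1 n, X j ω

/-- The triangular array `(A_n X_j : 1 ≤ j ≤ n, n ≥ 1)` is infinitesimal:
`sup_{1 ≤ j ≤ n} P(‖A_n X_j‖ ≥ ε) → 0` as `n → ∞`, for every `ε > 0`. -/
def Infinitesimal {Ω : Type*} [MeasurableSpace Ω] {d : ℕ} (P : Measure Ω)
    (A : ℕ → Matrix (Fin d) (Fin d) ℝ) (X : ℕ → Ω → (Fin d → ℝ)) : Prop :=
  ∀ ε > (0 : ℝ), ∀ δ > (0 : ℝ), ∃ N : ℕ, ∀ n ≥ N, ∀ j : ℕ, 1 ≤ j → j ≤ n →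
    (P {ω | ε ≤ ‖(A n).mulVec (X j ω)‖}).toReal < δ

/-- `det_J A`: the determinant of the restriction of `J A J` to the subspace
`J(ℝ^d)` (the range of `J`), which `J A J` maps into itself. -/
noncomputable def detJ {d : ℕ} (J A : Matrix (Fin d) (Fin d) ℝ) : ℝ :=
  LinearMap.det ((J * A * J).mulVecLin.restrict
    (p := LinearMap.range J.mulVecLin) (q := LinearMap.range J.mulVecLin)
    (fun x _ => ⟨(A * J).mulVecLin x, by
      simp [← Matrix.mulVecLin_mul, ← Matrix.mul_assoc]⟩))

section PowersInCompactSemigroups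

variable {M : Type*}

lemma pow_succ_mem [Monoid M] {S : Subsemigroup M} {a : M} (ha : a ∈ S) (k : ℕ) :
    a ^ (k + 1) ∈ S := by
  induction k with
  | zero => simpa using ha
  | succ k ih => exact pow_succ a (k + 1) ▸ S.mul_mem ih ha

variable [TopologicalSpace M]

lemma exists_isIdempotentElem_mem_closure_pow [Monoid M] [ContinuousMul M] [T2Space M]
    {S : Subsemigroup M} (hS : IsCompact (S : Set M)) {a : M} (ha : a ∈ S) :
    ∃ e ∈ S, IsIdempotentElem e ∧ e ∈ closure (Set.range fun k : ℕ => a ^ (k + 1)) := by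
  have hpow : closure (Set.range fun k : ℕ => a ^ (k + 1)) ⊆ S :=
    closure_minimal (Set.range_subset_iff.2 fun k => pow_succ_mem ha k) hS.isClosed
  obtain ⟨e, he, hidem⟩ := exists_idempotent_in_compact_subsemigroup
    (fun r : M => continuous_mul_const r) _ (Set.range_nonempty _).closure
    (hS.of_isClosed_subset isClosed_closure hpow)
    fun x hx y hy => map_mem_closure₂ continuous_mul hx hy (by
      rintro _ ⟨m, rfl⟩ _ ⟨n, rfl⟩
      exact ⟨m + 1 + n, pow_add a (m + 1) (n + 1)⟩)
  exact ⟨e, hpow he, hidem, he⟩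

lemma tendsto_pow_zero_of_zero_mem_closure [MonoidWithZero M] [ContinuousMul M]
    {K : Set M} (hK : IsCompact K) {a : M} (ha : ∀ k, a ^ (k + 1) ∈ K)
    (h0 : 0 ∈ closure (Set.range fun k : ℕ => a ^ (k + 1))) :
    Tendsto (fun k => a ^ k) atTop (𝓝 0) := by
  intro U hU
  have hmul : ∀ᶠ x in 𝓝 (0 : M), ∀ y ∈ K, x * y ∈ U :=
    hK.eventually_forall_of_forall_eventually fun y _ =>
      continuous_mul.continuousAt.eventually_mem (by simpa using hU)
  obtain ⟨_, ⟨m, rfl⟩, hm⟩ := ((mem_closure_iff_frequently.1 h0).and_eventually hmul).exists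
  refine mem_map.2 ?_
  filter_upwards [eventually_ge_atTop (m + 2)] with k hk
  obtain ⟨j, rfl⟩ := Nat.exists_eq_add_of_le hk
  have hsplit : a ^ (m + 2 + j) = a ^ (m + 1) * a ^ (j + 1) := by
    rw [← pow_add]
    congr 1
    ring
  exact Set.mem_preimage.2 (hsplit ▸ hm _ (ha j))

theorem tendsto_pow_zero_of_forall_isIdempotentElem_eq_zero [MonoidWithZero M] [ContinuousMul M]
    [T2Space M] {S : Subsemigroup M} (hS : IsCompact (S : Set M))
    (hidem : ∀ e ∈ S, IsIdempotentElem e → e = 0) {a : M} (ha : a ∈ S) :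
    Tendsto (fun k => a ^ k) atTop (𝓝 0) := by
  obtain ⟨e, heS, he, hcl⟩ := exists_isIdempotentElem_mem_closure_pow hS ha
  exact tendsto_pow_zero_of_zero_mem_closure hS (pow_succ_mem ha) (hidem e heS he ▸ hcl)

end PowersInCompactSemigroups

section Tightness

lemma isTightMeasureSet_image2_map_of_isCompact {X E F : Type*} [TopologicalSpace X]
    [TopologicalSpace E] [MeasurableSpace E] [OpensMeasurableSpace E] [TopologicalSpace F]
    [MeasurableSpace F] [BorelSpace F] [T2Space F] {f : X → E → F}
    (hf : Continuous (Function.uncurry f)) {C : Set X} (hC : IsCompact C) {S : Set (Measure E)}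
    (hS : IsTightMeasureSet S) :
    IsTightMeasureSet (Set.image2 (fun c μ => μ.map (f c)) C S) := by
  rw [isTightMeasureSet_iff_exists_isCompact_measure_compl_le] at hS ⊢
  intro ε hε
  obtain ⟨K, hK, hSK⟩ := hS ε hε
  have hCK : IsCompact (Function.uncurry f '' C ×ˢ K) := (hC.prod hK).image hf
  refine ⟨_, hCK, ?_⟩
  rintro _ ⟨c, hc, μ, hμ, rfl⟩
  rw [Measure.map_apply (hf.uncurry_left c).measurable hCK.measurableSet.compl]
  refine (measure_mono ?_).trans (hSK μ hμ)
  exact Set.compl_subset_compl.2 fun x hx => ⟨(c, x), ⟨hc, hx⟩, rfl⟩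

open scoped Pointwise

variable {G : Type*} [AddGroup G] [MeasurableSpace G] [MeasurableAdd₂ G]

lemma measure_mul_measure_compl_neg_add_le_conv {ρ ν : Measure G} [SFinite ν]
    {s t : Set G} (hs : MeasurableSet s) :
    ρ t * ν (-t + s)ᶜ ≤ (ρ ∗ ν) sᶜ := by
  rw [Measure.conv, Measure.map_apply measurable_add hs.compl, ← Measure.prod_prod]
  refine measure_mono ?_
  rintro ⟨x, y⟩ ⟨hx, hy⟩ hxy
  exact hy ⟨-x, Set.neg_mem_neg.2 hx, x + y, hxy, neg_add_cancel_left x y⟩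

lemma isTightMeasureSet_of_conv [TopologicalSpace G] [IsTopologicalAddGroup G] [T2Space G]
    [OpensMeasurableSpace G] {N R S : Set (Measure G)} (hR : IsTightMeasureSet R)
    (hS : IsTightMeasureSet S)
    (hN : ∀ ν ∈ N, SFinite ν ∧ ∃ ρ ∈ R, IsProbabilityMeasure ρ ∧ ρ ∗ ν ∈ S) :
    IsTightMeasureSet N := by
  rw [isTightMeasureSet_iff_exists_isCompact_measure_compl_le] at *
  intro ε hε
  obtain ⟨K, hK, hSK⟩ := hS (ε / 2) (ENNReal.half_pos hε.ne')
  obtain ⟨K', hK', hRK'⟩ := hR 2⁻¹ (by simp)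
  refine ⟨-K' + K, hK'.neg.add hK, fun ν hν => ?_⟩
  obtain ⟨_, ρ, hρ, _, hρν⟩ := hN ν hν
  have hhalf : 2⁻¹ ≤ ρ K' := by
    have h := hRK' ρ hρ
    rwa [prob_compl_eq_one_sub hK'.measurableSet, tsub_le_iff_tsub_le, ENNReal.one_sub_inv_two] at h
  have hle : 2⁻¹ * ν (-K' + K)ᶜ ≤ 2⁻¹ * ε :=
    calc 2⁻¹ * ν (-K' + K)ᶜ ≤ ρ K' * ν (-K' + K)ᶜ := by gcongr
      _ ≤ (ρ ∗ ν) Kᶜ := measure_mul_measure_compl_neg_add_le_conv hK.measurableSet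
      _ ≤ ε / 2 := hSK _ hρν
      _ = 2⁻¹ * ε := ENNReal.div_eq_inv_mul
  exact (ENNReal.mul_le_mul_iff_right (by simp) (by simp)).1 hle

end Tightness

section CharacteristicFunctions

lemma exists_ae_eq_const_of_norm_charFun_eq_one {E : Type*} [NormedAddCommGroup E]
    [InnerProductSpace ℝ E] [CompleteSpace E] [SecondCountableTopology E] [MeasurableSpace E]
    [BorelSpace E] {μ : Measure E} [IsProbabilityMeasure μ] (h : ∀ t, ‖charFun μ t‖ = 1) :
    ∃ c, ∀ᵐ x ∂μ, x = c := by
  have := Measure.isProbabilityMeasure_map (μ := μ) (f := ((-1 : ℝ) • ·)) (by fun_prop)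
  have hsymm : μ.map ((-1 : ℝ) • ·) ∗ μ = Measure.dirac 0 := by
    refine Measure.ext_of_charFun (funext fun t => ?_)
    rw [charFun_conv, charFun_map_smul, neg_one_smul, charFun_neg, mul_comm,
      Complex.mul_conj, Complex.normSq_eq_norm_sq, h]
    simp
  have hsum : ∀ᵐ p ∂(μ.map ((-1 : ℝ) • ·)).prod μ, p.1 + p.2 = 0 := by
    refine ae_of_ae_map (p := (· = 0)) measurable_add.aemeasurable ?_
    rw [← Measure.conv, hsymm]
    simp
  obtain ⟨y, hy⟩ := (Measure.ae_ae_of_ae_prod hsum).exists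
  exact ⟨-y, hy.mono fun x hx => eq_neg_of_add_eq_zero_right hx⟩

variable {E : Type*} [NormedAddCommGroup E] [NormedSpace ℝ E] [MeasurableSpace E]

lemma norm_charFunDual_le_one [OpensMeasurableSpace E] (μ : Measure E) [IsProbabilityMeasure μ]
    (L : StrongDual ℝ E) : ‖charFunDual μ L‖ ≤ 1 := by
  have := Measure.isProbabilityMeasure_map (μ := μ) L.continuous.aemeasurable
  rw [charFunDual_eq_charFun_map_one]
  exact norm_charFun_le_one 1

lemma charFunDual_zero (μ : Measure E) [IsProbabilityMeasure μ] : charFunDual μ 0 = 1 := by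
  simp [charFunDual_apply]

lemma continuous_charFunDual [OpensMeasurableSpace E] (μ : Measure E) [IsFiniteMeasure μ] :
    Continuous (charFunDual μ) := by
  refine continuous_of_dominated (bound := fun _ => 1) (fun L => ?_) (fun L => ?_)
    (integrable_const 1) (ae_of_all _ fun x => ?_)
  · exact (BoundedContinuousFunction.probCharDual L).continuous.aestronglyMeasurable
  · exact ae_of_all _ fun x => (Complex.norm_exp_ofReal_mul_I _).le
  · simp only [BoundedContinuousFunction.probCharDual_apply]
    fun_prop

lemma continuous_charFunDual_apply [OpensMeasurableSpace E] (L : StrongDual ℝ E) :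
    Continuous fun ν : ProbabilityMeasure E => charFunDual (ν : Measure E) L :=
  continuous_iff_continuousAt.2 fun _ =>
    (ProbabilityMeasure.tendsto_iff_forall_integral_rclike_tendsto ℂ).1 tendsto_id
      (BoundedContinuousFunction.probCharDual L)

lemma exists_ae_eq_const_of_norm_charFunDual_smul_eq_one [OpensMeasurableSpace E]
    {μ : Measure E} [IsProbabilityMeasure μ] {L : StrongDual ℝ E}
    (h : ∀ r : ℝ, ‖charFunDual μ (r • L)‖ = 1) : ∃ c, ∀ᵐ x ∂μ, L x = c := by
  have := Measure.isProbabilityMeasure_map (μ := μ) L.continuous.aemeasurable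
  obtain ⟨c, hc⟩ := exists_ae_eq_const_of_norm_charFun_eq_one (μ := μ.map L) fun r => by
    rw [charFun_map_eq_charFunDual_smul, h]
  exact ⟨c, ae_of_ae_map L.continuous.aemeasurable hc⟩

end CharacteristicFunctions

section DecompositionSemigroup

variable {E : Type*} [NormedAddCommGroup E] [NormedSpace ℝ E] [MeasurableSpace E] [BorelSpace E]

/-- The Urbanik decomposability semigroup `D(μ)` on a normed space, with the continuous linear
operators in place of the matrices. -/
def decompositionSemigroup [SecondCountableTopology E] (μ : Measure E) [IsProbabilityMeasure μ] :
    Subsemigroup (E →L[ℝ] E) where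
  carrier := {A | ∃ ν : Measure E, IsProbabilityMeasure ν ∧ μ = μ.map A ∗ ν}
  mul_mem' := by
    rintro A B ⟨ν, _, hA⟩ ⟨ρ, _, hB⟩
    have := Measure.isProbabilityMeasure_map (μ := ρ) A.continuous.aemeasurable
    refine ⟨ρ.map A ∗ ν, inferInstance, ?_⟩
    calc μ = (μ.map B ∗ ρ).map A ∗ ν := by rw [← hB, ← hA]
      _ = ((μ.map B).map A ∗ ρ.map A) ∗ ν := by rw [Measure.map_conv_continuousLinearMap]
      _ = μ.map (A * B) ∗ (ρ.map A ∗ ν) := by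
        rw [Measure.conv_assoc, Measure.map_map (by fun_prop) (by fun_prop)]
        rfl

/-- Fullness of a measure, expressed through functionals: no nonzero continuous linear functional is
almost surely constant. -/
def IsNondegenerate (μ : Measure E) : Prop :=
  ∀ (L : StrongDual ℝ E) (c : ℝ), (∀ᵐ x ∂μ, L x = c) → L = 0

lemma norm_charFunDual_le_comp [SecondCountableTopology E] {μ : Measure E} [IsProbabilityMeasure μ]
    {A : E →L[ℝ] E} (hA : A ∈ decompositionSemigroup μ) (L : StrongDual ℝ E) :
    ‖charFunDual μ L‖ ≤ ‖charFunDual μ (L ∘L A)‖ := by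
  obtain ⟨ν, _, hA⟩ := hA
  have := Measure.isProbabilityMeasure_map (μ := μ) A.continuous.aemeasurable
  calc ‖charFunDual μ L‖ = ‖charFunDual μ (L ∘L A)‖ * ‖charFunDual ν L‖ := by
        conv_lhs => rw [hA, charFunDual_conv, charFunDual_map, norm_mul]
    _ ≤ ‖charFunDual μ (L ∘L A)‖ :=
        mul_le_of_le_one_right (norm_nonneg _) (norm_charFunDual_le_one ν L)

lemma IsNondegenerate.eq_zero_of_tendsto_comp [SecondCountableTopology E] {μ : Measure E}
    [IsProbabilityMeasure μ] (hμ : IsNondegenerate μ) {ι : Type*} {l : Filter ι} [l.NeBot]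
    {A : ι → E →L[ℝ] E} (hA : ∀ n, A n ∈ decompositionSemigroup μ) {L : ι → StrongDual ℝ E}
    {L₀ : StrongDual ℝ E} (hL : Tendsto L l (𝓝 0)) (hLA : Tendsto (fun n => L n ∘L A n) l (𝓝 L₀)) :
    L₀ = 0 := by
  have hone (r : ℝ) : ‖charFunDual μ (r • L₀)‖ = 1 := by
    have hcont : Continuous fun L : StrongDual ℝ E => ‖charFunDual μ (r • L)‖ :=
      ((continuous_charFunDual μ).comp (continuous_const_smul r)).norm
    have hlim : Tendsto (fun n => ‖charFunDual μ (r • L n)‖) l (𝓝 1) := by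
      simpa [Function.comp_def, charFunDual_zero] using (hcont.tendsto 0).comp hL
    exact (norm_charFunDual_le_one μ _).antisymm <|
      le_of_tendsto_of_tendsto' hlim ((hcont.tendsto L₀).comp hLA) fun n =>
        norm_charFunDual_le_comp (hA n) (r • L n)
  obtain ⟨c, hc⟩ := exists_ae_eq_const_of_norm_charFunDual_smul_eq_one hone
  exact hμ L₀ c hc

lemma isTightMeasureSet_cofactors [CompleteSpace E] [SecondCountableTopology E] (μ : Measure E)
    [IsProbabilityMeasure μ] {C : Set (E →L[ℝ] E)} (hC : IsCompact C) :
    IsTightMeasureSet {ν : Measure E | IsProbabilityMeasure ν ∧ ∃ A ∈ C, μ = μ.map A ∗ ν} := by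
  have hμ : IsTightMeasureSet {μ} := isTightMeasureSet_singleton
  refine isTightMeasureSet_of_conv (isTightMeasureSet_image2_map_of_isCompact
    (f := fun (A : E →L[ℝ] E) x => A x) isBoundedBilinearMap_apply.continuous hC hμ) hμ ?_
  rintro ν ⟨_, A, hA, heq⟩
  exact ⟨inferInstance, μ.map A, ⟨A, hA, μ, rfl, rfl⟩,
    Measure.isProbabilityMeasure_map A.continuous.aemeasurable, heq.symm⟩

lemma isClosed_setOf_eq_map_conv [CompleteSpace E] [SecondCountableTopology E] (μ : Measure E)
    [IsProbabilityMeasure μ] :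
    IsClosed {p : (E →L[ℝ] E) × ProbabilityMeasure E | μ = μ.map p.1 ∗ (p.2 : Measure E)} := by
  have heq (p : (E →L[ℝ] E) × ProbabilityMeasure E) : μ = μ.map p.1 ∗ (p.2 : Measure E) ↔
      ∀ L, charFunDual μ L = charFunDual μ (L ∘L p.1) * charFunDual (p.2 : Measure E) L := by
    have := Measure.isProbabilityMeasure_map (μ := μ) p.1.continuous.aemeasurable
    simp_rw [← charFunDual_map, ← charFunDual_conv, ← funext_iff]
    exact ⟨congrArg charFunDual, Measure.ext_of_charFunDual⟩
  simp only [heq, Set.ofPred_forall]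
  refine isClosed_iInter fun L => isClosed_eq continuous_const ?_
  exact ((continuous_charFunDual μ).comp (continuous_fst.const_clm_comp L)).mul
    ((continuous_charFunDual_apply L).comp continuous_snd)

variable [FiniteDimensional ℝ E]

lemma IsNondegenerate.exists_norm_comp_le {μ : Measure E} [IsProbabilityMeasure μ]
    (hμ : IsNondegenerate μ) :
    ∃ C : ℝ, ∀ A ∈ decompositionSemigroup μ, ∀ L : StrongDual ℝ E, ‖L ∘L A‖ ≤ C * ‖L‖ := by
  by_contra! hunbdd
  choose A hA L hL using fun n : ℕ => hunbdd n
  have hpos (n : ℕ) : 0 < ‖L n ∘L A n‖ := (by positivity : 0 ≤ n * ‖L n‖).trans_lt (hL n)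
  have hsphere (n : ℕ) : (‖L n ∘L A n‖⁻¹ • L n) ∘L A n ∈ Metric.sphere (0 : StrongDual ℝ E) 1 := by
    rw [mem_sphere_zero_iff_norm, ContinuousLinearMap.smul_comp, norm_smul, norm_inv, norm_norm,
      inv_mul_cancel₀ (hpos n).ne']
  have hzero : Tendsto (fun n => ‖L n ∘L A n‖⁻¹ • L n) atTop (𝓝 0) := by
    refine squeeze_zero_norm' ?_ tendsto_inv_atTop_nhds_zero_nat
    filter_upwards [eventually_gt_atTop 0] with n hn
    rw [norm_smul, norm_inv, norm_norm, inv_mul_le_iff₀ (hpos n), ← div_eq_mul_inv,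
      le_div_iff₀' (by positivity)]
    exact (hL n).le
  obtain ⟨L₀, hL₀, ψ, hψ, hlim⟩ :=
    (isCompact_sphere (0 : StrongDual ℝ E) 1).tendsto_subseq hsphere
  have : L₀ = 0 := hμ.eq_zero_of_tendsto_comp (fun n => hA (ψ n))
    (hzero.comp hψ.tendsto_atTop) hlim
  simp [this] at hL₀

lemma IsNondegenerate.isBounded_decompositionSemigroup {μ : Measure E} [IsProbabilityMeasure μ]
    (hμ : IsNondegenerate μ) :
    Bornology.IsBounded (decompositionSemigroup μ : Set (E →L[ℝ] E)) := by
  obtain ⟨C, hC⟩ := hμ.exists_norm_comp_le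
  refine isBounded_iff_forall_norm_le.2 ⟨max C 0, fun A hA => ?_⟩
  refine A.opNorm_le_bound (le_max_right C 0) fun x =>
    NormedSpace.norm_le_dual_bound ℝ (A x) (by positivity) fun L => ?_
  calc ‖L (A x)‖ ≤ ‖L ∘L A‖ * ‖x‖ := (L ∘L A).le_opNorm x
    _ ≤ max C 0 * ‖L‖ * ‖x‖ := by
      gcongr
      exact (hC A hA L).trans (by gcongr; exact le_max_left C 0)
    _ = max C 0 * ‖x‖ * ‖L‖ := by ring

theorem IsNondegenerate.isCompact_decompositionSemigroup {μ : Measure E} [IsProbabilityMeasure μ]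
    (hμ : IsNondegenerate μ) : IsCompact (decompositionSemigroup μ : Set (E →L[ℝ] E)) := by
  have hC := hμ.isBounded_decompositionSemigroup.isCompact_closure
  set C := closure (decompositionSemigroup μ : Set (E →L[ℝ] E))
  let N : Set (ProbabilityMeasure E) := {ν | ∃ A ∈ C, μ = μ.map A ∗ (ν : Measure E)}
  have hN : IsCompact (closure N) := by
    refine isCompact_closure_of_isTightMeasureSet ((isTightMeasureSet_cofactors μ hC).subset ?_)
    rintro _ ⟨ν, hν, rfl⟩
    exact ⟨inferInstance, hν⟩
  have hproj : (decompositionSemigroup μ : Set (E →L[ℝ] E)) =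
      Prod.fst '' (C ×ˢ closure N ∩ {p | μ = μ.map p.1 ∗ (p.2 : Measure E)}) := by
    refine Set.ext fun A => ⟨?_, ?_⟩
    · rintro ⟨ν, hν, hA⟩
      have hAC : A ∈ C := subset_closure ⟨ν, hν, hA⟩
      exact ⟨(A, ⟨ν, hν⟩), ⟨⟨hAC, subset_closure ⟨A, hAC, hA⟩⟩, hA⟩, rfl⟩
    · rintro ⟨⟨A, ν⟩, ⟨-, hA⟩, rfl⟩
      exact ⟨ν, inferInstance, hA⟩
  rw [hproj]
  exact ((hC.prod hN).inter_right (isClosed_setOf_eq_map_conv μ)).image continuous_fst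

end DecompositionSemigroup

section UrbanikSemigroup

variable {d : ℕ}

lemma IsFull.isNondegenerate {μ : Measure (Fin d → ℝ)} [IsProbabilityMeasure μ] (hμ : IsFull μ) :
    IsNondegenerate μ := by
  intro L c hc
  by_contra hL
  obtain ⟨v, rfl⟩ := hc.exists
  have hker : L.ker ≠ ⊤ := fun htop =>
    hL (ContinuousLinearMap.coe_injective (LinearMap.ker_eq_top.1 htop))
  have hone : μ {x | x - v ∈ L.ker} = 1 := by
    simp only [LinearMap.mem_ker, map_sub, sub_eq_zero]
    exact (mem_ae_iff_prob_eq_one (measurableSet_eq_fun L.measurable measurable_const)).1 hc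
  exact (hμ v L.ker hker).ne hone

/-- Matrices as continuous linear operators on `ℝ^d`. -/
noncomputable def mulVecCLMEquiv (d : ℕ) :
    Matrix (Fin d) (Fin d) ℝ ≃ₐ[ℝ] ((Fin d → ℝ) →L[ℝ] (Fin d → ℝ)) :=
  Matrix.toLinAlgEquiv'.trans (Module.End.toContinuousLinearMap (Fin d → ℝ))

/-- `UrbanikD μ` as a subsemigroup of the matrices. -/
noncomputable def urbanikSemigroup (μ : Measure (Fin d → ℝ)) [IsProbabilityMeasure μ] :
    Subsemigroup (Matrix (Fin d) (Fin d) ℝ) :=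
  (decompositionSemigroup μ).comap (mulVecCLMEquiv d : _ →ₙ* _)

lemma mem_urbanikSemigroup {μ : Measure (Fin d → ℝ)} [IsProbabilityMeasure μ]
    {A : Matrix (Fin d) (Fin d) ℝ} : A ∈ urbanikSemigroup μ ↔ A ∈ UrbanikD μ :=
  Iff.rfl

lemma IsFull.isCompact_urbanikSemigroup {μ : Measure (Fin d → ℝ)} [IsProbabilityMeasure μ]
    (hμ : IsFull μ) : IsCompact (urbanikSemigroup μ : Set (Matrix (Fin d) (Fin d) ℝ)) :=
  (mulVecCLMEquiv d).toLinearEquiv.toContinuousLinearEquiv.toHomeomorph.isCompact_preimage.2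
    hμ.isNondegenerate.isCompact_decompositionSemigroup

end UrbanikSemigroup

section Compression

variable {n R : Type*} [Fintype n] [CommSemiring R]

/-- The compression `A ↦ JAJ|_{J(Rⁿ)}`, as a map that is linear in `A`. -/
def compression (J : Matrix n n R) :
    Matrix n n R →ₗ[R] Module.End R (LinearMap.range J.mulVecLin) where
  toFun A := J.mulVecLin.rangeRestrict ∘ₗ (A * J).mulVecLin ∘ₗ (LinearMap.range J.mulVecLin).subtype
  map_add' A B := by ext x : 2; simp [add_mul, mulVec_add]
  map_smul' c A := by ext x : 2; simp

lemma coe_compression_apply (J A : Matrix n n R) (x : LinearMap.range J.mulVecLin) :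
    (compression J A x : n → R) = (J * A * J) *ᵥ (x : n → R) := by
  simp [compression, mul_assoc]

lemma compression_mul {J B : Matrix n n R} (A : Matrix n n R) (hB : J * B = B) :
    compression J (A * B) = compression J A * compression J B := by
  ext x : 2
  have h : J * (A * B) * J = J * A * J * (J * B * J) := by
    simp only [hB, mul_assoc]
    rw [← mul_assoc J B, hB]
  rw [Module.End.mul_apply]
  simp only [coe_compression_apply, mulVec_mulVec, h]

lemma compression_self {J : Matrix n n R} (hJ : J * J = J) : compression J J = 1 := by
  ext ⟨_, y, rfl⟩ : 2
  simp [coe_compression_apply, hJ]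

variable {d : ℕ} {J B : Matrix (Fin d) (Fin d) ℝ}

lemma detJ_eq_det_compression (J A : Matrix (Fin d) (Fin d) ℝ) :
    detJ J A = LinearMap.det (compression J A) := by
  refine congrArg LinearMap.det (LinearMap.ext fun x => Subtype.ext ?_)
  rw [coe_compression_apply]
  rfl

lemma detJ_mul (A : Matrix (Fin d) (Fin d) ℝ) (hB : J * B = B) :
    detJ J (A * B) = detJ J A * detJ J B := by
  simp only [detJ_eq_det_compression, compression_mul A hB, map_mul]

lemma detJ_self (hJ : J * J = J) : detJ J J = 1 := by
  rw [detJ_eq_det_compression, compression_self hJ, map_one]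

lemma continuous_detJ (J : Matrix (Fin d) (Fin d) ℝ) : Continuous (detJ J) := by
  simp only [funext (detJ_eq_det_compression J)]
  exact ContinuousLinearMap.continuous_det.comp (LinearMap.continuous_of_finiteDimensional
    (LinearMap.toContinuousLinearMap.toLinearMap ∘ₗ compression J))

/-- The semigroup of matrices `A = JA = AJ` with `|det_J A| ≤ c`. -/
noncomputable def cornerDetLE (J : Matrix (Fin d) (Fin d) ℝ) {c : ℝ} (hc : c ≤ 1) :
    Subsemigroup (Matrix (Fin d) (Fin d) ℝ) where
  carrier := {A | (J * A = A ∧ A * J = A) ∧ |detJ J A| ≤ c}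
  mul_mem' := by
    rintro A B ⟨⟨hJA, -⟩, hA⟩ ⟨⟨hJB, hBJ⟩, hB⟩
    refine ⟨⟨by rw [← mul_assoc, hJA], by rw [mul_assoc, hBJ]⟩, ?_⟩
    rw [detJ_mul A hJB, abs_mul]
    exact (mul_le_of_le_one_left (abs_nonneg _) (hA.trans hc)).trans hB

lemma isClosed_cornerDetLE (J : Matrix (Fin d) (Fin d) ℝ) {c : ℝ} (hc : c ≤ 1) :
    IsClosed (cornerDetLE J hc : Set (Matrix (Fin d) (Fin d) ℝ)) :=
  ((isClosed_eq (continuous_const_mul J) continuous_id).inter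
    (isClosed_eq (continuous_mul_const J) continuous_id)).inter
    (isClosed_le (continuous_detJ J).abs continuous_const)

end Compression

theorem pow_tendsto_zero_of_detJ_lt_one_general
    {d : ℕ} {μ : Measure (Fin d → ℝ)} [IsProbabilityMeasure μ] (hfull : IsFull μ)
    {J : Matrix (Fin d) (Fin d) ℝ} (hJ : J * J = J)
    (hprim : ¬ ∃ L ∈ UrbanikD μ, L ≠ 0 ∧ L ≠ J ∧ L * L = L ∧ J * L = L ∧ L * J = L)
    {T : Matrix (Fin d) (Fin d) ℝ} (hT : T ∈ UrbanikD μ) (hJT : J * T = T) (hTJ : T * J = T)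
    (hdet : |detJ J T| < 1) :
    Tendsto (fun k => T ^ k) atTop (𝓝 0) := by
  have hcompact : IsCompact ((urbanikSemigroup μ ⊓ cornerDetLE J hdet.le :
      Subsemigroup (Matrix (Fin d) (Fin d) ℝ)) : Set (Matrix (Fin d) (Fin d) ℝ)) :=
    hfull.isCompact_urbanikSemigroup.inter_right (isClosed_cornerDetLE J hdet.le)
  refine tendsto_pow_zero_of_forall_isIdempotentElem_eq_zero hcompact ?_
    ⟨mem_urbanikSemigroup.2 hT, ⟨hJT, hTJ⟩, le_rfl⟩
  rintro L ⟨hL, ⟨hJL, hLJ⟩, hLdet⟩ hLidem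
  have hLneJ : L ≠ J := by
    rintro rfl
    rw [detJ_self hJ, abs_one] at hLdet
    exact hdet.not_ge hLdet
  by_contra hL0
  exact hprim ⟨L, mem_urbanikSemigroup.1 hL, hL0, hLneJ, hLidem, hJL, hLJ⟩

/-- If `J ∈ D(μ)` is a nonzero primitive idempotent (μ full) and `T ∈ D(μ)` satisfies
`JT = TJ = T` and `0 < det_J T < 1`, then `T^k → 0` as `k → ∞`. -/
theorem pow_tendsto_zero_of_detJ_lt_one
    {d : ℕ} (μ : Measure (Fin d → ℝ)) [IsProbabilityMeasure μ] (hfull : IsFull μ)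
    (J : Matrix (Fin d) (Fin d) ℝ) (hJD : J ∈ UrbanikD μ) (hJ0 : J ≠ 0)
    (hJid : J * J = J)
    (hprim : ¬ ∃ L ∈ UrbanikD μ, L ≠ 0 ∧ L ≠ J ∧ L * L = L ∧ J * L = L ∧ L * J = L)
    (T : Matrix (Fin d) (Fin d) ℝ) (hTD : T ∈ UrbanikD μ)
    (hJT : J * T = T) (hTJ : T * J = T)
    (hdet0 : 0 < detJ J T) (hdet1 : detJ J T < 1) :
    Filter.Tendsto (fun k => T ^ k) Filter.atTop (nhds 0) :=
  pow_tendsto_zero_of_detJ_lt_one_general hfull hJid hprim hTD hJT hTJ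
    (abs_lt.2 ⟨by linarith, hdet1⟩)
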